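/- Let A be a finite alphabet, let Q be a probability mass function on A, let n be a positive integer, and let P be any probability mass function on Aⁿ. Let P̄(a) = (1/n)·Σ_{i=1}^{n} P_i(a) be the average of the n single-letter marginals P_1, …, P_n of P. Then D(P ‖ Qⁿ) ≥ n · D(P̄ ‖ Q), where Qⁿ denotes the n-fold product pmf Qⁿ(a₁…aₙ) = Π_{i=1}^{n} Q(a_i). -/

import Mathlib

/-- Informational divergence (base 2) of two pmfs on a finite set,
with the convention `0·log₂(0/q) = 0`. -/
noncomputable def kl {Ω : Type*} [Fintype Ω] (P Q : Ω → ℝ) : ℝ :=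
  ∑ a, P a * Real.logb 2 (P a / Q a)

/-- The n-fold product pmf `Qⁿ(a₁…aₙ) = ∏ᵢ Q(aᵢ)` on strings of length `n`. -/
noncomputable def prodPmf {A : Type*} [Fintype A] (Q : A → ℝ) (n : ℕ) :
    (Fin n → A) → ℝ :=
  fun x => ∏ i, Q (x i)

/-- The i-th single-letter marginal `P_i(a) = ∑_{x : x i = a} P(x)` of a pmf on `Aⁿ`. -/
noncomputable def marginal {A : Type*} [Fintype A] [DecidableEq A] (n : ℕ)
    (P : (Fin n → A) → ℝ) (i : Fin n) : A → ℝ :=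
  fun a => ∑ x ∈ Finset.univ.filter (fun x : Fin n → A => x i = a), P x

/-- The average single-letter marginal `P̄(a) = (1/n)·∑ᵢ P_i(a)`. -/
noncomputable def avgMarginal {A : Type*} [Fintype A] [DecidableEq A] (n : ℕ)
    (P : (Fin n → A) → ℝ) : A → ℝ :=
  fun a => (1 / (n : ℝ)) * ∑ i : Fin n, marginal n P i a

/-!
The average marginal `P̄` satisfies the compensation identity
`D(P ‖ Qⁿ) = D(P ‖ P̄ⁿ) + n · D(P̄ ‖ Q)`: the log-likelihood ratio of `P̄ⁿ` to `Qⁿ` is a sum over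
the letters of a string, and its expectation under `P` only depends on `P̄`. The first summand is
nonnegative by Gibbs' inequality.
-/

section Divergence

variable {Ω : Type*} [Fintype Ω] {P Q R : Ω → ℝ}

theorem sub_div_log_two_le_mul_logb_div {p r : ℝ} (hp : 0 ≤ p) (hr : 0 ≤ r)
    (hpr : p ≠ 0 → r ≠ 0) : (p - r) / Real.log 2 ≤ p * Real.logb 2 (p / r) := by
  rw [Real.logb, ← mul_div_assoc]
  gcongr
  rcases hp.eq_or_lt with rfl | hp
  · simpa using hr
  · have hr : 0 < r := hr.lt_of_ne' (hpr hp.ne')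
    calc p - r = p * (1 - (p / r)⁻¹) := by field_simp
      _ ≤ p * Real.log (p / r) := by
        gcongr
        exact Real.one_sub_inv_le_log_of_pos (div_pos hp hr)

theorem kl_nonneg_of_sum_le (hP : ∀ a, 0 ≤ P a) (hR : ∀ a, 0 ≤ R a)
    (hPR : ∀ a, P a ≠ 0 → R a ≠ 0) (hsum : ∑ a, R a ≤ ∑ a, P a) : 0 ≤ kl P R :=
  calc 0 ≤ (∑ a, P a - ∑ a, R a) / Real.log 2 :=
        div_nonneg (sub_nonneg.2 hsum) (Real.log_nonneg one_le_two)
    _ = ∑ a, (P a - R a) / Real.log 2 := by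
        rw [← Finset.sum_sub_distrib, Finset.sum_div]
    _ ≤ kl P R :=
        Finset.sum_le_sum fun a _ => sub_div_log_two_le_mul_logb_div (hP a) (hR a) (hPR a)

theorem kl_eq_kl_add_sum_mul_logb_div (hPQ : ∀ a, P a ≠ 0 → Q a ≠ 0)
    (hPR : ∀ a, P a ≠ 0 → R a ≠ 0) :
    kl P Q = kl P R + ∑ a, P a * Real.logb 2 (R a / Q a) := by
  rw [kl, kl, ← Finset.sum_add_distrib]
  refine Finset.sum_congr rfl fun a _ => ?_
  by_cases ha : P a = 0
  · simp [ha]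
  · have hQ := hPQ a ha
    have hR := hPR a ha
    rw [← mul_add, ← Real.logb_mul (div_ne_zero ha hR) (div_ne_zero hR hQ),
      div_mul_div_cancel₀ hR]

end Divergence

section ProdPmf

variable {A : Type*} [Fintype A]

theorem sum_prodPmf (Q : A → ℝ) (n : ℕ) : ∑ x, prodPmf Q n x = (∑ a, Q a) ^ n :=
  (Fintype.sum_pow Q n).symm

variable {n : ℕ}

theorem prodPmf_nonneg {Q : A → ℝ} (hQ : ∀ a, 0 ≤ Q a) (x : Fin n → A) : 0 ≤ prodPmf Q n x :=
  Finset.prod_nonneg fun i _ => hQ (x i)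

theorem prodPmf_ne_zero {Q : A → ℝ} {x : Fin n → A} (hx : ∀ i, Q (x i) ≠ 0) :
    prodPmf Q n x ≠ 0 :=
  Finset.prod_ne_zero_iff.2 fun i _ => hx i

theorem logb_prodPmf_div_prodPmf (b : ℝ) {R Q : A → ℝ} {x : Fin n → A}
    (hR : ∀ i, R (x i) ≠ 0) (hQ : ∀ i, Q (x i) ≠ 0) :
    Real.logb b (prodPmf R n x / prodPmf Q n x) = ∑ i, Real.logb b (R (x i) / Q (x i)) := by
  rw [prodPmf, prodPmf, ← Finset.prod_div_distrib,
    Real.logb_prod _ _ fun i _ => div_ne_zero (hR i) (hQ i)]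

end ProdPmf

section Marginal

variable {A : Type*} [Fintype A] [DecidableEq A] {n : ℕ} {P : (Fin n → A) → ℝ}

theorem sum_marginal_mul (P : (Fin n → A) → ℝ) (i : Fin n) (g : A → ℝ) :
    ∑ a, marginal n P i a * g a = ∑ x, P x * g (x i) := by
  rw [← Finset.sum_fiberwise Finset.univ (fun x : Fin n → A => x i)]
  refine Finset.sum_congr rfl fun a _ => ?_
  rw [marginal, Finset.sum_mul]
  refine Finset.sum_congr rfl fun x hx => ?_
  rw [(Finset.mem_filter.1 hx).2]

theorem natCast_mul_avgMarginal (P : (Fin n → A) → ℝ) (a : A) :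
    n * avgMarginal n P a = ∑ i, marginal n P i a := by
  rcases n.eq_zero_or_pos with rfl | hn
  · simp
  · rw [avgMarginal]
    field_simp

theorem natCast_mul_sum_avgMarginal_mul (P : (Fin n → A) → ℝ) (g : A → ℝ) :
    n * ∑ a, avgMarginal n P a * g a = ∑ x, P x * ∑ i, g (x i) :=
  calc n * ∑ a, avgMarginal n P a * g a = ∑ a, ∑ i, marginal n P i a * g a := by
        simp only [Finset.mul_sum, ← mul_assoc, natCast_mul_avgMarginal, Finset.sum_mul]
    _ = ∑ i, ∑ x, P x * g (x i) := by
        rw [Finset.sum_comm]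
        simp only [sum_marginal_mul]
    _ = ∑ x, P x * ∑ i, g (x i) := by
        rw [Finset.sum_comm]
        simp only [Finset.mul_sum]

theorem sum_avgMarginal (hn : n ≠ 0) (P : (Fin n → A) → ℝ) :
    ∑ a, avgMarginal n P a = ∑ x, P x := by
  have h := natCast_mul_sum_avgMarginal_mul P fun _ => 1
  simp only [mul_one, Finset.sum_const, Finset.card_univ, Fintype.card_fin, nsmul_eq_mul,
    mul_comm _ (n : ℝ), ← Finset.mul_sum] at h
  exact mul_left_cancel₀ (Nat.cast_ne_zero.2 hn) h

theorem marginal_nonneg (hP : ∀ x, 0 ≤ P x) (i : Fin n) (a : A) : 0 ≤ marginal n P i a :=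
  Finset.sum_nonneg fun x _ => hP x

theorem le_marginal (hP : ∀ x, 0 ≤ P x) (x : Fin n → A) (i : Fin n) :
    P x ≤ marginal n P i (x i) :=
  Finset.single_le_sum (fun y _ => hP y) (by simp)

theorem avgMarginal_nonneg (hP : ∀ x, 0 ≤ P x) (a : A) : 0 ≤ avgMarginal n P a :=
  mul_nonneg (by positivity) (Finset.sum_nonneg fun i _ => marginal_nonneg hP i a)

theorem avgMarginal_apply_ne_zero (hP : ∀ x, 0 ≤ P x) {x : Fin n → A} (hx : P x ≠ 0)
    (i : Fin n) : avgMarginal n P (x i) ≠ 0 := by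
  have hpos : 0 < ∑ j, marginal n P j (x i) :=
    calc 0 < P x := (hP x).lt_of_ne' hx
      _ ≤ marginal n P i (x i) := le_marginal hP x i
      _ ≤ ∑ j, marginal n P j (x i) :=
          Finset.single_le_sum (fun j _ => marginal_nonneg hP j (x i)) (Finset.mem_univ i)
  rw [← natCast_mul_avgMarginal] at hpos
  exact right_ne_zero_of_mul hpos.ne'

theorem kl_prodPmf_eq_kl_prodPmf_avgMarginal_add (hP : ∀ x, 0 ≤ P x) {Q : A → ℝ}
    (hPQ : ∀ x, P x ≠ 0 → ∀ i, Q (x i) ≠ 0) :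
    kl P (prodPmf Q n) = kl P (prodPmf (avgMarginal n P) n) + n * kl (avgMarginal n P) Q := by
  rw [kl_eq_kl_add_sum_mul_logb_div (fun x hx => prodPmf_ne_zero (hPQ x hx))
    (fun x hx => prodPmf_ne_zero (avgMarginal_apply_ne_zero hP hx)),
    kl.eq_def (avgMarginal n P), natCast_mul_sum_avgMarginal_mul]
  congr 1
  refine Finset.sum_congr rfl fun x _ => ?_
  by_cases hx : P x = 0
  · simp [hx]
  · rw [logb_prodPmf_div_prodPmf 2 (avgMarginal_apply_ne_zero hP hx) (hPQ x hx)]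

theorem kl_prodPmf_avgMarginal_nonneg (hn : n ≠ 0) (hP0 : ∀ x, 0 ≤ P x) (hP1 : ∑ x, P x = 1) :
    0 ≤ kl P (prodPmf (avgMarginal n P) n) := by
  refine kl_nonneg_of_sum_le hP0 (prodPmf_nonneg (avgMarginal_nonneg hP0))
    (fun x hx => prodPmf_ne_zero (avgMarginal_apply_ne_zero hP0 hx)) ?_
  rw [sum_prodPmf, sum_avgMarginal hn, hP1, one_pow]

end Marginal

/-- For a pmf `Q` that may vanish somewhere, `hPQ` says that `P ≪ Qⁿ`, i.e. that `D(P ‖ Qⁿ) < ∞`. -/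
theorem divergence_ge_n_mul_divergence_avg_marginal_general
    {A : Type*} [Fintype A] [DecidableEq A] {n : ℕ} (hn : n ≠ 0) {Q : A → ℝ}
    {P : (Fin n → A) → ℝ} (hP0 : ∀ x, 0 ≤ P x) (hP1 : ∑ x, P x = 1)
    (hPQ : ∀ x, P x ≠ 0 → ∀ i, 0 < Q (x i)) :
    kl P (prodPmf Q n) ≥ (n : ℝ) * kl (avgMarginal n P) Q := by
  rw [kl_prodPmf_eq_kl_prodPmf_avgMarginal_add hP0 fun x hx i => (hPQ x hx i).ne']
  exact le_add_of_nonneg_left (kl_prodPmf_avgMarginal_nonneg hn hP0 hP1)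

/-- For any pmf `P` on `Aⁿ` and any (everywhere positive) pmf `Q` on `A`,
`D(P ‖ Qⁿ) ≥ n · D(P̄ ‖ Q)`, where `P̄` is the average of the single-letter marginals. -/
theorem divergence_ge_n_mul_divergence_avg_marginal
    {A : Type*} [Fintype A] [DecidableEq A] (n : ℕ) (hn : 0 < n)
    (Q : A → ℝ) (hQpos : ∀ a, 0 < Q a) (hQ1 : ∑ a, Q a = 1)
    (P : (Fin n → A) → ℝ) (hP0 : ∀ x, 0 ≤ P x) (hP1 : ∑ x, P x = 1) :
    kl P (prodPmf Q n) ≥ (n : ℝ) * kl (avgMarginal n P) Q :=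
  divergence_ge_n_mul_divergence_avg_marginal_general hn.ne' hP0 hP1 fun x _ i => hQpos (x i)
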